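/- For all integers 0 ≤ m ≤ n and every nonzero complex z: q^{-m}·(1-q^{2m+2}z²)·Ĉ_{n-m}(qz;q^{2m+2}|q²) + q^{-n}·z·(1-q^{2n+2m+2})·Ĉ_{n-m-1}(z;q^{2m+2}|q²) = q^{-n}·(1-q^{2n+2}z²)·Ĉ_{n-m}(z;q^{2m+2}|q²), where Ĉ_{-1} := 0. This family of identities is equivalent to the intertwining relation K_1(z)·L^T(μ(qz)) = L^T(μ(z))·M_1(z) (with μ(z) = (z+z⁻¹)/2) which decouples the matrix-valued Askey–Wilson q-difference operator D_1 after conjugation by L^T. -/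

import Mathlib

open Finset Polynomial MeasureTheory Matrix
open scoped BigOperators ComplexOrder

noncomputable section

/-- q-shifted factorial `(a;p)_n`. -/
def qp (a p : ℂ) (n : ℕ) : ℂ := ∏ j ∈ Finset.range n, (1 - a * p ^ j)

/-- q-Racah polynomial `R_n(μ(x);α,β,γ,δ;p)`. -/
def qRacah (p α β γ δ : ℂ) (n x : ℕ) : ℂ :=
  ∑ k ∈ Finset.range (min n x + 1),
    qp (p ^ (-(n : ℤ))) p k * qp (α * β * p ^ (n + 1)) p k *
        qp (p ^ (-(x : ℤ))) p k * qp (γ * δ * p ^ (x + 1)) p k /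
      (qp (α * p) p k * qp (β * δ * p) p k * qp (γ * p) p k * qp p p k) * p ^ k

/-- `IsUltra C` says that for each base `p`, parameter `β` and degree `n`, `C p β n` is
the continuous q-ultraspherical polynomial: it has degree at most `n` and its values at
`(z+z⁻¹)/2` are given by the symmetric Laurent sum. -/
def IsUltra (C : ℂ → ℂ → ℕ → Polynomial ℂ) : Prop :=
  ∀ (p β : ℂ) (n : ℕ),
    (C p β n).degree ≤ (n : ℕ) ∧
      ∀ z : ℂ, z ≠ 0 →
        (C p β n).eval ((z + z⁻¹) / 2) =
          ∑ r ∈ Finset.range (n + 1),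
            qp β p r * qp β p (n - r) / (qp p p r * qp p p (n - r)) * z ^ ((n : ℤ) - 2 * r)

/-- The matrix-valued polynomial `P_n` (entries in `Polynomial ℂ`); here `L = 2ℓ`. -/
def Pm (q : ℂ) (L : ℕ) (C : ℂ → ℂ → ℕ → Polynomial ℂ) (n : ℕ) :
    Matrix (Fin (L + 1)) (Fin (L + 1)) (Polynomial ℂ) :=
  Matrix.of fun i j =>
    ∑ k ∈ Finset.Icc (i : ℕ) (min L (n + (j : ℕ))),
      Polynomial.C
          ((-1 : ℂ) ^ k *
            q ^ ((n : ℤ) + (2 * (k : ℤ) + 1) * ((k : ℤ) - ((i : ℕ) : ℤ)) +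
                ((j : ℕ) : ℤ) * (2 * (k : ℤ) + 1) + 2 * (k : ℤ) * ((L : ℤ) + (n : ℤ) + 1) -
                (k : ℤ) ^ 2) *
            (qp (q ^ 2) (q ^ 2) k * qp (q ^ 2) (q ^ 2) (k + (i : ℕ)) /
              (qp (q ^ 2) (q ^ 2) (2 * k) * qp (q ^ 2) (q ^ 2) (i : ℕ))) *
            (qp (q ^ (-(2 * (L : ℤ)))) (q ^ 2) k *
                qp (q ^ (-(2 * ((j : ℕ) : ℤ) + 2 * (n : ℤ)))) (q ^ 2) k /
              (qp (q ^ 2) (q ^ 2) k * qp (q ^ (2 * (L : ℤ) + 4)) (q ^ 2) k)) *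
            (qp (q ^ 2) (q ^ 2) (n + (j : ℕ) - k) /
              qp (q ^ (4 * (k : ℤ) + 4)) (q ^ 2) (n + (j : ℕ) - k)) *
            qRacah (q ^ 2) 1 1 (q ^ (-(2 * (n : ℤ) + 2 * ((j : ℕ) : ℤ) + 2)))
              (q ^ (-(2 * (L : ℤ) + 2))) k (j : ℕ)) *
        (C (q ^ 2) (q ^ (-(2 * (k : ℤ)))) (k - (i : ℕ)) *
          C (q ^ 2) (q ^ (2 * (k : ℤ) + 2)) (n + (j : ℕ) - k))

/-- Evaluation of the matrix-valued polynomial `P_n` at a point. -/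
def evP (q : ℂ) (L : ℕ) (C : ℂ → ℂ → ℕ → Polynomial ℂ) (n : ℕ) (x : ℂ) :
    Matrix (Fin (L + 1)) (Fin (L + 1)) ℂ :=
  (Pm q L C n).map (Polynomial.eval x)

/-- The coefficients `α_t(m,n)` of the weight. -/
def alphaC (q : ℂ) (L m n t : ℕ) : ℂ :=
  q ^ (2 * (n : ℤ) * ((L : ℤ) + 1) - (n : ℤ) ^ 2 - (2 * (L : ℤ) + 3) * (t : ℤ) + (t : ℤ) ^ 2 -
      (L : ℤ) + (m : ℤ)) *
    ((1 - q ^ (2 * (L : ℤ) + 2)) / (1 - q ^ (2 * (m : ℤ) + 2))) *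
    (qp (q ^ 2) (q ^ 2) (L - n) * qp (q ^ 2) (q ^ 2) n / qp (q ^ 2) (q ^ 2) L) *
    ((-1 : ℂ) ^ ((m : ℤ) - (t : ℤ)) * qp (q ^ (2 * (m : ℤ) - 2 * (L : ℤ))) (q ^ 2) (n - t) /
      qp (q ^ (2 * (m : ℤ) + 4)) (q ^ 2) (n - t)) *
    (qp (q ^ (2 * (L : ℤ) + 4 - 2 * (t : ℤ))) (q ^ 2) t / qp (q ^ 2) (q ^ 2) t)

/-- The matrix weight `W(x)`. -/
def Wm (q : ℂ) (L : ℕ) (x : ℂ) : Matrix (Fin (L + 1)) (Fin (L + 1)) ℂ :=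
  Matrix.of fun i j =>
    ∑ t ∈ Finset.range (max (i : ℕ) (j : ℕ) + 1),
      alphaC q L (min (i : ℕ) (j : ℕ)) (max (i : ℕ) (j : ℕ)) t *
        (Polynomial.Chebyshev.U ℂ
            ((min (i : ℕ) (j : ℕ) : ℤ) + (max (i : ℕ) (j : ℕ) : ℤ) - 2 * (t : ℤ))).eval x

/-- The antidiagonal involution `J`. -/
def Jm (L : ℕ) : Matrix (Fin (L + 1)) (Fin (L + 1)) ℂ :=
  Matrix.of fun i j => if (i : ℕ) + (j : ℕ) = L then 1 else 0

/-- The diagonal leading-coefficient matrix `Γ_n`. -/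
def Gam (q : ℂ) (L n : ℕ) : Matrix (Fin (L + 1)) (Fin (L + 1)) ℂ :=
  Matrix.diagonal fun i =>
    2 ^ n * q ^ n * qp (q ^ (2 * ((i : ℕ) : ℤ) + 2)) (q ^ 2) n *
        qp (q ^ (2 * (L : ℤ) - 2 * ((i : ℕ) : ℤ) + 2)) (q ^ 2) n /
      (qp (q ^ 2) (q ^ 2) n * qp (q ^ (2 * (L : ℤ) + 4)) (q ^ 2) n)

/-- The squared-norm matrix `G_m`. -/
def Gmat (q : ℂ) (L m : ℕ) : Matrix (Fin (L + 1)) (Fin (L + 1)) ℂ :=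
  Matrix.diagonal fun i =>
    q ^ (2 * (m : ℤ) - (L : ℤ)) * (1 - q ^ (2 * (L : ℤ) + 2)) ^ 2 /
      ((1 - q ^ (2 * (m : ℤ) + 2 * ((i : ℕ) : ℤ) + 2)) *
        (1 - q ^ (2 * (L : ℤ) - 2 * ((i : ℕ) : ℤ) + 2 * (m : ℤ) + 2)))

/-- The unipotent lower triangular matrix `L(x)` of the LDU decomposition. -/
def Lm (q : ℂ) (L : ℕ) (C : ℂ → ℂ → ℕ → Polynomial ℂ) (x : ℂ) :
    Matrix (Fin (L + 1)) (Fin (L + 1)) ℂ :=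
  Matrix.of fun m k =>
    if (k : ℕ) ≤ (m : ℕ) then
      q ^ (((m : ℕ) : ℤ) - ((k : ℕ) : ℤ)) * qp (q ^ 2) (q ^ 2) (m : ℕ) *
          qp (q ^ 2) (q ^ 2) (2 * (k : ℕ) + 1) /
          (qp (q ^ 2) (q ^ 2) ((m : ℕ) + (k : ℕ) + 1) * qp (q ^ 2) (q ^ 2) (k : ℕ)) *
        (C (q ^ 2) (q ^ (2 * (k : ℕ) + 2)) ((m : ℕ) - (k : ℕ))).eval x
    else 0

/-- The claimed inverse of `L(x)`. -/
def Linv (q : ℂ) (L : ℕ) (C : ℂ → ℂ → ℕ → Polynomial ℂ) (x : ℂ) :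
    Matrix (Fin (L + 1)) (Fin (L + 1)) ℂ :=
  Matrix.of fun k n =>
    if (n : ℕ) ≤ (k : ℕ) then
      q ^ ((2 * ((k : ℕ) : ℤ) + 1) * (((k : ℕ) : ℤ) - ((n : ℕ) : ℤ))) *
          qp (q ^ 2) (q ^ 2) (k : ℕ) * qp (q ^ 2) (q ^ 2) ((k : ℕ) + (n : ℕ)) /
          (qp (q ^ 2) (q ^ 2) (2 * (k : ℕ)) * qp (q ^ 2) (q ^ 2) (n : ℕ)) *
        (C (q ^ 2) (q ^ (-(2 * ((k : ℕ) : ℤ)))) ((k : ℕ) - (n : ℕ))).eval x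
    else 0

/-- The constants `c_k(ℓ)`. -/
def ckC (q : ℂ) (L k : ℕ) : ℂ :=
  q ^ (-(L : ℤ)) / 4 * (1 - q ^ (4 * k + 2)) * qp (q ^ 2) (q ^ 2) (L + k + 1) *
      qp (q ^ 2) (q ^ 2) (L - k) * qp (q ^ 2) (q ^ 2) k ^ 4 /
    (qp (q ^ 2) (q ^ 2) (2 * k + 1) ^ 2 * qp (q ^ 2) (q ^ 2) L ^ 2)

/-- The diagonal part `T(x)` of the LDU decomposition. -/
def Tm (q : ℂ) (L : ℕ) (x : ℂ) : Matrix (Fin (L + 1)) (Fin (L + 1)) ℂ :=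
  Matrix.diagonal fun k =>
    ckC q L (k : ℕ) *
      (4 * ∏ j ∈ Finset.Icc 1 (k : ℕ), (1 - 2 * (2 * x ^ 2 - 1) * q ^ (2 * j) + q ^ (4 * j)))

/-- The coefficient matrix `M₁(z)` of the q-difference operator `D₁`. -/
def M1f (q : ℂ) (L : ℕ) (z : ℂ) : Matrix (Fin (L + 1)) (Fin (L + 1)) ℂ :=
  Matrix.of fun i j =>
    if (j : ℕ) = (i : ℕ) + 1 then
      -(q ^ (1 - ((i : ℕ) : ℤ)) * (1 - q ^ (2 * (i : ℕ) + 2)) / (1 - q ^ 2) ^ 2 *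
        (z / (1 - z ^ 2)))
    else if (j : ℕ) = (i : ℕ) then
      q ^ (1 - ((i : ℕ) : ℤ)) / (1 - q ^ 2) ^ 2 *
        ((1 - q ^ (2 * (i : ℕ) + 2) * z ^ 2) / (1 - z ^ 2))
    else 0

/-- `M₂(z) = J M₁(z) J`. -/
def M2f (q : ℂ) (L : ℕ) (z : ℂ) : Matrix (Fin (L + 1)) (Fin (L + 1)) ℂ :=
  Jm L * M1f q L z * Jm L

/-- The eigenvalue matrix `Λ_n(1)`. -/
def Lam1 (q : ℂ) (L n : ℕ) : Matrix (Fin (L + 1)) (Fin (L + 1)) ℂ :=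
  Matrix.diagonal fun j =>
    (q ^ (-((j : ℕ) : ℤ) - (n : ℤ) - 1) + q ^ (((j : ℕ) : ℤ) + (n : ℤ) + 1)) / (q⁻¹ - q) ^ 2

/-- The eigenvalue matrix `Λ_n(2) = J Λ_n(1) J`. -/
def Lam2 (q : ℂ) (L n : ℕ) : Matrix (Fin (L + 1)) (Fin (L + 1)) ℂ :=
  Jm L * Lam1 q L n * Jm L

/-- The diagonal coefficient matrix `K₁(z)` of the decoupled operator. -/
def K1f (q : ℂ) (L : ℕ) (z : ℂ) : Matrix (Fin (L + 1)) (Fin (L + 1)) ℂ :=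
  Matrix.diagonal fun i =>
    q ^ (1 - ((i : ℕ) : ℤ)) / (1 - q ^ 2) ^ 2 *
      ((1 - q ^ (2 * (i : ℕ) + 2) * z ^ 2) / (1 - z ^ 2))

/-- The symmetric Laurent polynomial `Ĉ_k(z;β|p)`. -/
def Chat (p β : ℂ) (k : ℕ) (z : ℂ) : ℂ :=
  ∑ r ∈ Finset.range (k + 1),
    qp β p r * qp β p (k - r) / (qp p p r * qp p p (k - r)) * z ^ ((k : ℤ) - 2 * (r : ℤ))

/-- The matrix polynomials `R_n(x) = L(x)ᵀ P_n(x) Γ_n⁻¹`. -/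
def Rmat (q : ℂ) (L : ℕ) (C : ℂ → ℂ → ℕ → Polynomial ℂ) (n : ℕ) (x : ℂ) :
    Matrix (Fin (L + 1)) (Fin (L + 1)) ℂ :=
  (Lm q L C x)ᵀ * evP q L C n x * (Gam q L n)⁻¹


lemma qp_succ' (a p : ℂ) (n : ℕ) : qp a p (n + 1) = qp a p n * (1 - a * p ^ n) := by
  simp [qp, Finset.prod_range_succ]

lemma qpp_ne (p : ℂ) (hp : ∀ j : ℕ, 1 - p ^ (j + 1) ≠ 0) (n : ℕ) : qp p p n ≠ 0 := by
  unfold qp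
  refine Finset.prod_ne_zero_iff.mpr fun j _ => ?_
  have := hp j
  rwa [pow_succ'] at this

lemma ratio_rec (p β : ℂ) (hp : ∀ j : ℕ, 1 - p ^ (j + 1) ≠ 0) (n : ℕ) :
    (1 - p ^ (n + 1)) * (qp β p (n + 1) / qp p p (n + 1)) =
      (1 - β * p ^ n) * (qp β p n / qp p p n) := by
  have h1 := qpp_ne p hp n
  have h2 := hp n
  rw [qp_succ', qp_succ', ← pow_succ']
  field_simp

lemma Chat_key (q β : ℂ) (hq : q ≠ 0) (hp : ∀ j : ℕ, 1 - (q ^ 2) ^ (j + 1) ≠ 0) (K : ℕ)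
    (z : ℂ) (hz : z ≠ 0) :
    q ^ (K + 1) * (1 - β * z ^ 2) * Chat (q ^ 2) β (K + 1) (q * z) +
      z * (1 - β ^ 2 * (q ^ 2) ^ K) * Chat (q ^ 2) β K z =
    (1 - β * (q ^ 2) ^ (K + 1) * z ^ 2) * Chat (q ^ 2) β (K + 1) z := by
  set p := q ^ 2 with hpq
  let a : ℕ → ℂ := fun n => qp β p n / qp p p n
  have ha : ∀ n, (1 - p ^ (n + 1)) * a (n + 1) = (1 - β * p ^ n) * a n := ratio_rec p β hp
  have hC : ∀ k w, Chat p β k w =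
      ∑ r ∈ Finset.range (k + 1), a r * a (k - r) * w ^ ((k : ℤ) - 2 * (r : ℤ)) := by
    intro k w
    unfold Chat
    refine Finset.sum_congr rfl fun r _ => ?_
    simp only [a]
    rw [div_mul_div_comm]
  have hA : q ^ (K + 1) * Chat p β (K + 1) (q * z) = ∑ r ∈ Finset.range (K + 1 + 1),
      p ^ (K + 1 - r) * (a r * a (K + 1 - r) * z ^ (((K + 1 : ℕ) : ℤ) - 2 * (r : ℤ))) := by
    rw [hC, Finset.mul_sum]
    refine Finset.sum_congr rfl fun r hr => ?_
    have hr' : r ≤ K + 1 := by simpa [Nat.lt_succ_iff] using hr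
    have : q ^ (K + 1) * q ^ (((K + 1 : ℕ) : ℤ) - 2 * (r : ℤ)) = p ^ (K + 1 - r) := by
      rw [hpq, ← pow_mul, ← zpow_natCast, ← zpow_natCast, ← zpow_add₀ hq]
      congr 1
      push_cast [Nat.cast_sub hr']
      ring
    rw [mul_zpow, ← this]
    ring
  have h1 : ∑ r ∈ Finset.range (K + 1 + 1),
      (1 - p ^ (K + 1 - r)) * (a r * a (K + 1 - r) * z ^ (((K + 1 : ℕ) : ℤ) - 2 * (r : ℤ))) =
      z * ∑ r ∈ Finset.range (K + 1),
        (1 - β * p ^ (K - r)) * (a r * a (K - r) * z ^ ((K : ℤ) - 2 * (r : ℤ))) := by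
    rw [Finset.sum_range_succ, Finset.mul_sum]
    simp only [Nat.sub_self, pow_zero, sub_self, zero_mul, add_zero]
    refine Finset.sum_congr rfl fun r hr => ?_
    have hr' : r ≤ K := by simpa [Nat.lt_succ_iff] using hr
    have e : K + 1 - r = (K - r) + 1 := by omega
    have e2 : z ^ (((K + 1 : ℕ) : ℤ) - 2 * (r : ℤ)) = z * z ^ ((K : ℤ) - 2 * (r : ℤ)) := by
      rw [← zpow_one_add₀ hz]; congr 1; push_cast; ring
    rw [e, e2]
    linear_combination (a r * z * z ^ ((K : ℤ) - 2 * (r : ℤ))) * ha (K - r)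
  have h2 : z ^ 2 * ∑ r ∈ Finset.range (K + 1 + 1),
      (p ^ (K + 1 - r) - p ^ (K + 1)) *
        (a r * a (K + 1 - r) * z ^ (((K + 1 : ℕ) : ℤ) - 2 * (r : ℤ))) =
      z * ∑ r ∈ Finset.range (K + 1),
        (p ^ (K - r) * (1 - β * p ^ r)) * (a r * a (K - r) * z ^ ((K : ℤ) - 2 * (r : ℤ))) := by
    rw [Finset.sum_range_succ', mul_add, Finset.mul_sum, Finset.mul_sum]
    simp only [Nat.sub_zero, sub_self, zero_mul, mul_zero, add_zero]
    refine Finset.sum_congr rfl fun r hr => ?_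
    have hr' : r ≤ K := by simpa [Nat.lt_succ_iff] using hr
    have e : K + 1 - (r + 1) = K - r := by omega
    have e2 : z ^ 2 * z ^ (((K + 1 : ℕ) : ℤ) - 2 * ((r + 1 : ℕ) : ℤ)) =
        z * z ^ ((K : ℤ) - 2 * (r : ℤ)) := by
      rw [← zpow_one_add₀ hz, ← zpow_natCast, ← zpow_add₀ hz]; congr 1; push_cast; ring
    have e3 : p ^ (K + 1) = p ^ (K - r) * p ^ (r + 1) := by
      rw [← pow_add]; congr 1; omega
    rw [e, e3]
    linear_combination (p ^ (K - r) * a (K - r) * z * z ^ ((K : ℤ) - 2 * (r : ℤ))) * ha r +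
      (p ^ (K - r) * (1 - p ^ (r + 1)) * a (r + 1) * a (K - r)) * e2
  have h3 : ∑ r ∈ Finset.range (K + 1),
        (1 - β * p ^ (K - r)) * (a r * a (K - r) * z ^ ((K : ℤ) - 2 * (r : ℤ))) +
      β * ∑ r ∈ Finset.range (K + 1),
        (p ^ (K - r) * (1 - β * p ^ r)) * (a r * a (K - r) * z ^ ((K : ℤ) - 2 * (r : ℤ))) =
      (1 - β ^ 2 * p ^ K) * Chat p β K z := by
    rw [hC, Finset.mul_sum, Finset.mul_sum, ← Finset.sum_add_distrib]
    refine Finset.sum_congr rfl fun r hr => ?_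
    have hr' : r ≤ K := by simpa [Nat.lt_succ_iff] using hr
    have e3 : p ^ K = p ^ (K - r) * p ^ r := by
      rw [← pow_add]; congr 1; omega
    rw [e3]
    ring
  simp only [sub_mul, one_mul, Finset.sum_sub_distrib] at h1
  rw [← hA, ← hC] at h1
  have h2' := h2
  simp only [sub_mul _ _ (_ * _ * _), Finset.sum_sub_distrib] at h2'
  rw [← hA, ← Finset.mul_sum, ← hC] at h2'
  simp only [sub_mul, one_mul, Finset.sum_sub_distrib] at h2' h3
  linear_combination -h1 - β * h2' - z * h3

/-- the three-term contiguous relation for the symmetric Laurent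
polynomials `Ĉ_k(z;q^{2m+2}|q²)` underlying the decoupling of the matrix-valued
Askey–Wilson q-difference operator (with `Ĉ_{-1} := 0`, i.e. the middle term is absent
when `m = n`). -/
theorem stmt19 (q : ℝ) (hq0 : 0 < q) (hq1 : q < 1) (m n : ℕ) (hmn : m ≤ n)
    (z : ℂ) (hz : z ≠ 0) :
    (q : ℂ) ^ (-(m : ℤ)) * (1 - (q : ℂ) ^ (2 * m + 2) * z ^ 2) *
        Chat ((q : ℂ) ^ 2) ((q : ℂ) ^ (2 * m + 2)) (n - m) ((q : ℂ) * z) +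
      (q : ℂ) ^ (-(n : ℤ)) * z * (1 - (q : ℂ) ^ (2 * n + 2 * m + 2)) *
        (if m < n then Chat ((q : ℂ) ^ 2) ((q : ℂ) ^ (2 * m + 2)) (n - m - 1) z else 0) =
      (q : ℂ) ^ (-(n : ℤ)) * (1 - (q : ℂ) ^ (2 * n + 2) * z ^ 2) *
        Chat ((q : ℂ) ^ 2) ((q : ℂ) ^ (2 * m + 2)) (n - m) z := by
  have hqc : (q : ℂ) ≠ 0 := by exact_mod_cast hq0.ne'
  rcases Nat.eq_or_lt_of_le hmn with h | h
  · subst h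
    simp [Chat, qp]
  · obtain ⟨K, rfl⟩ : ∃ K, n = m + (K + 1) := ⟨n - m - 1, by omega⟩
    have hp : ∀ j : ℕ, 1 - ((q : ℂ) ^ 2) ^ (j + 1) ≠ 0 := by
      intro j hj
      have h1 : (q ^ 2) ^ (j + 1) < 1 :=
        pow_lt_one₀ (by positivity) (pow_lt_one₀ hq0.le hq1 (by norm_num)) (by omega)
      have h2 : (1 : ℝ) - (q ^ 2) ^ (j + 1) = 0 := by exact_mod_cast hj
      linarith
    have key := Chat_key (q : ℂ) ((q : ℂ) ^ (2 * m + 2)) hqc hp K z hz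
    have e1 : m + (K + 1) - m = K + 1 := by omega
    have e2 : (q : ℂ) ^ (-(m : ℤ)) = (q : ℂ) ^ (-((m + (K + 1) : ℕ) : ℤ)) * (q : ℂ) ^ (K + 1) := by
      rw [← zpow_natCast (q : ℂ) (K + 1), ← zpow_add₀ hqc]; congr 1; push_cast; ring
    rw [if_pos h, e1, Nat.add_sub_cancel, e2]
    linear_combination (q : ℂ) ^ (-((m + (K + 1) : ℕ) : ℤ)) * key

end
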